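/- Let m be an integer and let z > 0 be real. Then (−1)^{m} · z^{m−1/2} · q^{m²/2} · θ_q(z q^{m}) tends to 1 − z^{−1} as q tends to 0 from the right (q ranging over (0,1)). -/

import Mathlib

/-!
By the quasi-periodicity `θ_q(xq) = -q^{-1/2} x⁻¹ θ_q(x)`, the quantity
`(-1)^m x^m q^{m²/2} θ_q(xq^m)` does not depend on the integer `m`, so it suffices to treat `m = 0`.
There `z^{-1/2} θ_q(z) = (zq; q)_∞ (z⁻¹; q)_∞`, and the `q`-Pochhammer symbol `(a; q)_∞` is jointly
continuous on `‖q‖ < 1`, with `(a; 0)_∞ = 1 - a`.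
-/

open Filter Topology

/-- The q-theta function
`θ_q(x) = (x^{1/2} - x^{-1/2}) ∏_{i=1}^∞ (1 - x q^i)(1 - x⁻¹ q^i)`. -/
noncomputable def qTheta (q x : ℝ) : ℝ :=
  (Real.sqrt x - (Real.sqrt x)⁻¹) *
    ∏' i : ℕ, (1 - x * q ^ (i + 1)) * (1 - x⁻¹ * q ^ (i + 1))

section QPochhammer

variable {R : Type*} [NormedCommRing R]

/-- The infinite `q`-Pochhammer symbol `(a; q)_∞ = ∏_{i ≥ 0} (1 - a q^i)`, out of which the
`q`-theta function is built. The product converges for `‖q‖ < 1`; elsewhere `∏'` may be junk. -/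
noncomputable def qPochhammer (a q : R) : R :=
  ∏' i : ℕ, (1 - a * q ^ i)

@[simp]
lemma qPochhammer_zero_right (a : R) : qPochhammer a 0 = 1 - a := by
  rw [qPochhammer, tprod_eq_mulSingle 0 fun i hi ↦ by simp [hi]]
  simp

variable [NormOneClass R]

lemma norm_mul_pow_le (a q : R) (i : ℕ) : ‖a * q ^ i‖ ≤ ‖a‖ * ‖q‖ ^ i :=
  (norm_mul_le _ _).trans (by gcongr; exact norm_pow_le q i)

variable [CompleteSpace R]

lemma multipliable_one_sub_mul_pow (a : R) {q : R} (hq : ‖q‖ < 1) :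
    Multipliable fun i : ℕ ↦ 1 - a * q ^ i := by
  have hsum : Summable fun i : ℕ ↦ ‖-(a * q ^ i)‖ := by
    simp only [norm_neg]
    exact ((summable_geometric_of_lt_one (norm_nonneg q) hq).mul_left ‖a‖).of_nonneg_of_le
      (fun _ ↦ norm_nonneg _) (norm_mul_pow_le a q)
  simpa only [sub_eq_add_neg] using multipliable_one_add_of_summable hsum

lemma qPochhammer_eq_one_sub_mul (a : R) {q : R} (hq : ‖q‖ < 1) :
    qPochhammer a q = (1 - a) * qPochhammer (a * q) q := by
  have hshift (i : ℕ) : 1 - a * q ^ (i + 1) = 1 - a * q * q ^ i := by ring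
  have htail : Multipliable fun i : ℕ ↦ 1 - a * q ^ (i + 1) := by
    simpa only [hshift] using multipliable_one_sub_mul_pow (a * q) hq
  rw [qPochhammer, tprod_eq_zero_mul' (f := fun i : ℕ ↦ 1 - a * q ^ i) htail]
  simp only [hshift, pow_zero, mul_one, qPochhammer]

lemma continuousAt_qPochhammer (a : R) {q : R} (hq : ‖q‖ < 1) :
    ContinuousAt (fun p : R × R ↦ qPochhammer p.1 p.2) (a, q) := by
  obtain ⟨r, hqr, hr⟩ := exists_between hq
  have hr₀ : 0 ≤ r := (norm_nonneg q).trans hqr.le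
  have hbound : ∀ᶠ p : R × R in 𝓝 (a, q), ∀ i : ℕ,
      ‖-(p.1 * p.2 ^ i)‖ ≤ (‖a‖ + 1) * r ^ i := by
    have ha : ∀ᶠ p : R × R in 𝓝 (a, q), ‖p.1‖ < ‖a‖ + 1 :=
      continuousAt_fst.norm.eventually_lt_const (lt_add_one ‖a‖)
    have hq' : ∀ᶠ p : R × R in 𝓝 (a, q), ‖p.2‖ < r :=
      continuousAt_snd.norm.eventually_lt_const hqr
    filter_upwards [ha, hq'] with p hp₁ hp₂ i
    calc ‖-(p.1 * p.2 ^ i)‖ = ‖p.1 * p.2 ^ i‖ := norm_neg _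
      _ ≤ ‖p.1‖ * ‖p.2‖ ^ i := norm_mul_pow_le p.1 p.2 i
      _ ≤ (‖a‖ + 1) * r ^ i := by gcongr
  have hterm (i : ℕ) : Tendsto (fun p : R × R ↦ -(p.1 * p.2 ^ i)) (𝓝 (a, q)) (𝓝 (-(a * q ^ i))) :=
    Continuous.tendsto (by fun_prop) (a, q)
  simpa only [ContinuousAt, qPochhammer, sub_eq_add_neg] using
    tendsto_tprod_one_add_of_dominated_convergence
      ((summable_geometric_of_lt_one hr₀ hr).mul_left (‖a‖ + 1)) hterm hbound

lemma tendsto_qPochhammer_mul_mul_qPochhammer_zero (a b : R) :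
    Tendsto (fun q : R ↦ qPochhammer (a * q) q * qPochhammer b q) (𝓝 0) (𝓝 (1 - b)) := by
  have hcont : ContinuousAt (fun q : R ↦ qPochhammer (a * q) q * qPochhammer b q) 0 := by
    refine .mul (.comp₂ (continuousAt_qPochhammer _ (by simp)) ?_ ?_)
      (.comp₂ (continuousAt_qPochhammer _ (by simp)) ?_ ?_) <;> fun_prop
  simpa using hcont.tendsto

end QPochhammer

lemma qPochhammer_mul_qPochhammer_inv_mul {𝕜 : Type*} [NormedField 𝕜] [CompleteSpace 𝕜] {q x : 𝕜}
    (hq₀ : q ≠ 0) (hq : ‖q‖ < 1) (hx : x ≠ 0) :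
    qPochhammer (x * q * q) q * qPochhammer (x * q)⁻¹ q =
      -(x * q)⁻¹ * (qPochhammer (x * q) q * qPochhammer x⁻¹ q) := by
  rw [qPochhammer_eq_one_sub_mul (x * q) hq, qPochhammer_eq_one_sub_mul (x * q)⁻¹ hq,
    show (x * q)⁻¹ * q = x⁻¹ by rw [mul_inv, inv_mul_cancel_right₀ hq₀]]
  linear_combination -(qPochhammer (x * q * q) q * qPochhammer x⁻¹ q) *
    inv_mul_cancel₀ (mul_ne_zero hx hq₀)

section QTheta

variable {q : ℝ}

lemma qTheta_eq_sqrt_mul_qPochhammer (x : ℝ) (hq : |q| < 1) :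
    qTheta q x = √x * (qPochhammer (x * q) q * qPochhammer x⁻¹ q) := by
  have hshift (y : ℝ) (i : ℕ) : 1 - y * q ^ (i + 1) = 1 - y * q * q ^ i := by ring
  have hprod : ∏' i : ℕ, (1 - x * q ^ (i + 1)) * (1 - x⁻¹ * q ^ (i + 1)) =
      qPochhammer (x * q) q * qPochhammer (x⁻¹ * q) q := by
    simp only [hshift, qPochhammer]
    exact (multipliable_one_sub_mul_pow _ hq).tprod_mul (multipliable_one_sub_mul_pow _ hq)
  have hsqrt : √x - (√x)⁻¹ = √x * (1 - x⁻¹) := by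
    rw [mul_sub, mul_one, ← div_eq_mul_inv, Real.sqrt_div_self', one_div]
  rw [qTheta, hprod, hsqrt, qPochhammer_eq_one_sub_mul x⁻¹ hq]
  ring

variable {x : ℝ}

lemma qTheta_mul_base (hq₀ : 0 < q) (hq₁ : q < 1) (hx : 0 < x) :
    qTheta q (x * q) = -((√q)⁻¹ * x⁻¹) * qTheta q x := by
  have hq : |q| < 1 := by rwa [abs_of_pos hq₀]
  have hsqrt : √(x * q) * (x * q)⁻¹ = (√q)⁻¹ * x⁻¹ * √x := by
    rw [Real.sqrt_mul hx.le, mul_inv, ← one_div √q, ← Real.sqrt_div_self', div_eq_mul_inv]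
    ring
  rw [qTheta_eq_sqrt_mul_qPochhammer (x * q) hq, qTheta_eq_sqrt_mul_qPochhammer x hq,
    qPochhammer_mul_qPochhammer_inv_mul hq₀.ne' hq hx.ne']
  linear_combination -(qPochhammer (x * q) q * qPochhammer x⁻¹ q) * hsqrt

lemma rpow_add_one_sq_div_two (hq₀ : 0 < q) (s : ℝ) :
    q ^ ((s + 1) ^ 2 / 2) = q ^ (s ^ 2 / 2) * q ^ s * √q := by
  rw [Real.sqrt_eq_rpow, ← Real.rpow_add hq₀, ← Real.rpow_add hq₀]
  ring_nf

lemma neg_one_zpow_mul_qTheta_mul_zpow (hq₀ : 0 < q) (hq₁ : q < 1) (hx : 0 < x) (m : ℤ) :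
    (-1) ^ m * x ^ m * q ^ ((m : ℝ) ^ 2 / 2) * qTheta q (x * q ^ m) = qTheta q x := by
  have hperiodic : Function.Periodic
      (fun n : ℤ ↦ (-1) ^ n * x ^ n * q ^ ((n : ℝ) ^ 2 / 2) * qTheta q (x * q ^ n)) 1 := by
    intro n
    have hshift : qTheta q (x * q ^ (n + 1)) =
        -((√q)⁻¹ * (x * q ^ n)⁻¹) * qTheta q (x * q ^ n) := by
      rw [zpow_add_one₀ hq₀.ne', ← mul_assoc, qTheta_mul_base hq₀ hq₁ (by positivity)]
    simp only [hshift, Int.cast_add, Int.cast_one, rpow_add_one_sq_div_two hq₀, Real.rpow_intCast,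
      zpow_add_one₀ hx.ne', zpow_add_one₀ (neg_ne_zero.mpr (one_ne_zero (α := ℝ)))]
    field_simp
  simpa using hperiodic.int_mul_eq m

end QTheta

/-- For an integer `m` and real `z > 0`,
`(-1)^m z^{m-1/2} q^{m²/2} θ_q(z q^m) → 1 - z⁻¹` as `q → 0⁺`,
with `q` ranging over `(0,1)`. -/
theorem qTheta_asymptotics_integral (m : ℤ) (z : ℝ) (hz : 0 < z) :
    Tendsto (fun q : ℝ =>
        (-1 : ℝ) ^ m * z ^ ((m : ℝ) - 1/2) * q ^ ((m : ℝ) ^ 2 / 2) *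
          qTheta q (z * q ^ m))
      (𝓝[Set.Ioo (0:ℝ) 1] 0) (𝓝 (1 - z⁻¹)) := by
  refine ((tendsto_qPochhammer_mul_mul_qPochhammer_zero z z⁻¹).mono_left
    nhdsWithin_le_nhds).congr' ?_
  filter_upwards [self_mem_nhdsWithin] with q ⟨hq₀, hq₁⟩
  have hz_rpow : z ^ ((m : ℝ) - 1/2) = z ^ m * (√z)⁻¹ := by
    rw [Real.rpow_sub hz, Real.rpow_intCast, ← Real.sqrt_eq_rpow, div_eq_mul_inv]
  symm
  calc (-1 : ℝ) ^ m * z ^ ((m : ℝ) - 1/2) * q ^ ((m : ℝ) ^ 2 / 2) * qTheta q (z * q ^ m)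
      = (√z)⁻¹ * ((-1) ^ m * z ^ m * q ^ ((m : ℝ) ^ 2 / 2) * qTheta q (z * q ^ m)) := by
        rw [hz_rpow]; ring
    _ = (√z)⁻¹ * qTheta q z := by rw [neg_one_zpow_mul_qTheta_mul_zpow hq₀ hq₁ hz m]
    _ = qPochhammer (z * q) q * qPochhammer z⁻¹ q := by
        rw [qTheta_eq_sqrt_mul_qPochhammer z (by rwa [abs_of_pos hq₀]),
          inv_mul_cancel_left₀ (Real.sqrt_pos.mpr hz).ne']
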